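/- A binary relation ≽ on A^N, where (A, ≥) is a meet-semilattice, is generalized threshold sufficientarian (sufficientarian with a sufficient set that is a ≥-filter) if and only if it satisfies weak order, symmetry, separability, sufficientarian judgment, monotonicity, and ≥-complements. -/

import Mathlib

open Function

section Defs

variable {N A : Type*}

/-- Weak order: complete and transitive. -/
def WeakOrderRel (R : (N → A) → (N → A) → Prop) : Prop :=
  (∀ x y, R x y ∨ R y x) ∧ ∀ x y z, R x y → R y z → R x z

/-- The strict part of a relation. -/
def StrictRel (R : (N → A) → (N → A) → Prop) (x y : N → A) : Prop :=
  R x y ∧ ¬ R y x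

/-- Symmetry: any allocation is socially indifferent to any permutation of it. -/
def SymmetryAx (R : (N → A) → (N → A) → Prop) : Prop :=
  ∀ (σ : Equiv.Perm N) (x : N → A), R x (x ∘ σ) ∧ R (x ∘ σ) x

open Classical in
/-- `splice M x y` agrees with `x` on `M` and with `y` off `M`. -/
noncomputable def splice (M : Set N) (x y : N → A) : N → A :=
  fun i => if i ∈ M then x i else y i

/-- Separability. -/
def SeparabilityAx (R : (N → A) → (N → A) → Prop) : Prop :=
  ∀ (M : Set N) (x y x' y' : N → A),
    (R (splice M x y) (splice M x' y) ↔ R (splice M x y') (splice M x' y'))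

open Classical in
/-- `alloc i a b` gives `a` to agent `i` and `b` to everyone else. -/
noncomputable def alloc (i : N) (a b : A) : N → A :=
  Function.update (fun _ => b) i a

open Classical in
/-- `alloc2 i j a c b` gives `a` to `i`, `c` to `j`, and `b` to the rest. -/
noncomputable def alloc2 (i j : N) (a c b : A) : N → A :=
  Function.update (alloc i a b) j c

/-- Sufficientarian judgment. -/
def SuffJudgment (R : (N → A) → (N → A) → Prop) : Prop :=
  ∀ (a b c : A) (i j : N), i ≠ j →
    StrictRel R (fun _ => b) (alloc i a b) →
    R (alloc i a b) (alloc2 i j a c b)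

/-- Weak sufficientarian judgment. -/
def WeakSuffJudgment (R : (N → A) → (N → A) → Prop) : Prop :=
  ∀ (a b c : A) (i j : N), i ≠ j →
    StrictRel R (fun _ => b) (alloc i a b) →
    StrictRel R (fun _ => b) (alloc2 i j a c b)

/-- Sufficientarianism: comparisons count agents whose consumption is in a sufficient set. -/
def IsSufficientarian [Fintype N] (R : (N → A) → (N → A) → Prop) : Prop :=
  ∃ S : Set A, ∀ x y : N → A,
    R x y ↔ Nat.card {i : N // x i ∈ S} ≥ Nat.card {i : N // y i ∈ S}

end Defs

/-- ≥-Complements. -/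
def ComplementsAx {N A : Type*} [SemilatticeInf A] (R : (N → A) → (N → A) → Prop) : Prop :=
  ∀ (i : N) (a b c : A),
    StrictRel R (alloc i a c) (alloc i (a ⊓ b) c) → StrictRel R (alloc i a c) (alloc i b c)

/-- Monotonicity. -/
def MonotonicityAx {N A : Type*} [Preorder A] (R : (N → A) → (N → A) → Prop) : Prop :=
  ∀ x y : N → A, (∀ i, y i ≤ x i) → R x y

/-- Generalized threshold sufficientarianism: sufficientarian with a sufficient set
that is a ≥-filter (upward closed and closed under binary meets). -/
def IsGenThresholdSuff {N A : Type*} [Fintype N] [SemilatticeInf A]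
    (R : (N → A) → (N → A) → Prop) : Prop :=
  ∃ S : Set A, (∀ x ∈ S, ∀ y : A, x ≤ y → y ∈ S) ∧ (∀ x ∈ S, ∀ y ∈ S, x ⊓ y ∈ S) ∧
    ∀ x y : N → A,
      R x y ↔ Nat.card {i : N // x i ∈ S} ≥ Nat.card {i : N // y i ∈ S}

section Helpers

open Classical in
noncomputable def ind {A : Type*} (S : Set A) (a : A) : ℕ := if a ∈ S then 1 else 0

lemma card_eq_sum_ind {N A : Type*} [Fintype N] (S : Set A) (x : N → A) :
    Nat.card {i : N // x i ∈ S} = ∑ i, ind S (x i) := by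
  classical
  simp [ind, Nat.card_eq_fintype_card, Fintype.card_subtype]

open Classical in
lemma sum_ind_update {N A : Type*} [Fintype N] (S : Set A) (x : N → A) (i : N) (a : A) :
    ∑ j, ind S (Function.update x i a j) = ind S a + ∑ j ∈ Finset.univ.erase i, ind S (x j) := by
  rw [← Finset.add_sum_erase _ _ (Finset.mem_univ i)]
  congr 1
  · simp
  · apply Finset.sum_congr rfl
    intro j hj
    rw [Function.update_of_ne (Finset.ne_of_mem_erase hj)]

open Classical in
lemma sum_ind_splice {N A : Type*} [Fintype N] (S : Set A) (M : Set N) (x y : N → A) :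
    ∑ j, ind S (splice M x y j) =
      (∑ j, if j ∈ M then ind S (x j) else 0) + ∑ j, if j ∈ M then 0 else ind S (y j) := by
  rw [← Finset.sum_add_distrib]
  apply Finset.sum_congr rfl
  intro j _
  by_cases h : j ∈ M <;> simp [splice, h]

lemma forward {N A : Type*} [Fintype N] [SemilatticeInf A]
    (R : (N → A) → (N → A) → Prop) (h : IsGenThresholdSuff R) :
      (WeakOrderRel R ∧ SymmetryAx R ∧ SeparabilityAx R ∧ SuffJudgment R ∧
        MonotonicityAx R ∧ ComplementsAx R) := by
  classical
  obtain ⟨S, hup, hinf, hR⟩ := h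
  simp only [card_eq_sum_ind] at hR
  have hu : ∀ x i a b, R (Function.update x i a) (Function.update x i b) ↔ ind S b ≤ ind S a := by
    intro x i a b
    rw [hR, sum_ind_update, sum_ind_update]
    omega
  refine ⟨⟨?_, ?_⟩, ?_, ?_, ?_, ?_, ?_⟩
  · intro x y
    rw [hR, hR]; omega
  · intro x y z
    rw [hR, hR, hR]; omega
  · intro σ x
    have : ∑ i, ind S ((x ∘ σ) i) = ∑ i, ind S (x i) :=
      Equiv.sum_comp σ (fun i => ind S (x i))
    rw [hR, hR, this]; omega
  · intro M x y x' y'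
    rw [hR, hR]
    simp only [sum_ind_splice]
    omega
  · intro a b c i j hij h
    have hb : (fun _ : N => b) = Function.update (fun _ => b) i b := by simp
    have hj : alloc i a b = Function.update (alloc i a b) j b := by
      have : alloc i a b j = b := by simp [alloc, Function.update_of_ne hij.symm]
      have h3 := Function.update_eq_self j (alloc i a b)
      rw [this] at h3
      exact h3.symm
    have h2 := h.2
    have h2 : ¬ ind S b ≤ ind S a := by
      rw [hb] at h2
      rw [← hu (fun _ => b) i]
      simpa [alloc] using h2
    have : R (Function.update (alloc i a b) j b) (Function.update (alloc i a b) j c) := by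
      rw [hu]
      unfold ind at *
      split_ifs at * <;> omega
    rw [← hj] at this
    exact this
  · intro x y hxy
    rw [hR]
    apply Finset.sum_le_sum
    intro i _
    have := hup (y i)
    unfold ind
    split_ifs with h1 h2
    · exact le_rfl
    · exact absurd (this h1 _ (hxy i)) h2
    · omega
    · omega
  · intro i a b c h
    simp only [StrictRel, alloc, hu] at h ⊢
    have h3 := hinf a
    unfold ind at *
    by_cases ha : a ∈ S <;> by_cases hb : b ∈ S <;> by_cases hab : a ⊓ b ∈ S <;> simp_all

lemma exists_perm {N : Type*} [Fintype N] (p q : N → Prop)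
    (h : Nat.card {i // p i} ≤ Nat.card {i // q i}) :
    ∃ σ : Equiv.Perm N, ∀ i, p i → q (σ i) := by
  classical
  simp only [Nat.card_eq_fintype_card, Fintype.card_subtype] at h
  obtain ⟨t, ht, htc⟩ := Finset.exists_subset_card_eq h
  have e : {i // p i} ≃ {i // i ∈ t} := by
    apply Fintype.equivOfCardEq
    rw [Fintype.card_subtype, Fintype.card_coe, htc]
  refine ⟨e.extendSubtype, fun i hi => ?_⟩
  have := e.extendSubtype_mem i hi
  have := ht this
  simpa using this

lemma backward {N A : Type*} [Fintype N] (hN : 2 ≤ Fintype.card N) [SemilatticeInf A]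
    (R : (N → A) → (N → A) → Prop) (hW : WeakOrderRel R) (hsym : SymmetryAx R)
    (hsep : SeparabilityAx R) (hsj : SuffJudgment R) (hmon : MonotonicityAx R)
    (hcomp : ComplementsAx R) : IsGenThresholdSuff R := by
  classical
  obtain ⟨hc, ht⟩ := hW
  have hrefl : ∀ x, R x x := fun x => (hc x x).elim id id
  obtain ⟨i0, j0, hij⟩ := Fintype.exists_pair_of_one_lt_card (α := N) (by omega)
  have hupd : ∀ (x y : N → A) i a b, R (Function.update x i a) (Function.update x i b) →
      R (Function.update y i a) (Function.update y i b) := by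
    intro x y i a b h
    have hs : ∀ (z : N → A) (d : A), splice {i} (fun _ => d) z = Function.update z i d := by
      intro z d
      ext k
      by_cases hk : k = i
      · subst hk; simp [splice]
      · simp [splice, hk]
    have := hsep {i} (fun _ => a) x (fun _ => b) y
    simp only [hs] at this
    exact this.1 h
  have hmove : ∀ (y : N → A) i j a b, R (alloc i a b) (alloc i b b) →
      R (Function.update y j a) (Function.update y j b) := by
    intro y i j a b h
    have hs : ∀ d, alloc i d b ∘ (Equiv.swap i j) = alloc j d b := by
      intro d
      ext k
      by_cases hk : k = j
      · subst hk; simp [alloc]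
      · by_cases hk' : k = i
        · subst hk'
          simp [alloc, hk, Function.update_of_ne (Ne.symm hk)]
        · simp [alloc, Equiv.swap_apply_of_ne_of_ne hk' hk, hk, hk']
    apply hupd (fun _ => b)
    have h1 := (hsym (Equiv.swap i j) (alloc i a b)).2
    have h2 := (hsym (Equiv.swap i j) (alloc i b b)).1
    rw [hs] at h1 h2
    exact ht _ _ _ h1 (ht _ _ _ h h2)
  obtain ⟨P, hP⟩ : ∃ P : A → A → Prop, ∀ y i a b,
      R (Function.update y i a) (Function.update y i b) ↔ P a b := by
    refine ⟨fun a b => ∀ y i, R (Function.update y i a) (Function.update y i b), ?_⟩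
    intro y i a b
    exact ⟨fun h z j => hmove z i j a b (hupd y _ i a b h), fun h => h y i⟩
  have Pc : ∀ a b, P a b ∨ P b a := by
    intro a b
    rw [← hP (fun _ => a) i0, ← hP (fun _ => a) i0]
    exact hc _ _
  have Pt : ∀ a b c, P a b → P b c → P a c := by
    intro a b c
    rw [← hP (fun _ => a) i0, ← hP (fun _ => a) i0, ← hP (fun _ => a) i0]
    exact ht _ _ _
  have Pmax : ∀ b a c, ¬ P a b → P b c := by
    intro b a c h
    have hb : (fun _ : N => b) = Function.update (fun _ => b) i0 b := by simp
    have hj : Function.update (alloc i0 a b) j0 b = alloc i0 a b := by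
      have : alloc i0 a b j0 = b := by simp [alloc, Function.update_of_ne hij.symm]
      have h3 := Function.update_eq_self j0 (alloc i0 a b)
      rw [this] at h3
      exact h3
    have hst : StrictRel R (fun _ => b) (alloc i0 a b) := by
      rw [hb]
      have h1 := (Pc a b).resolve_left h
      rw [← hP (fun _ => b) i0] at h h1
      unfold StrictRel alloc
      simp only at *
      exact ⟨h1, h⟩
    have := hsj a b c i0 j0 hij hst
    rw [← hP (alloc i0 a b) j0, hj]
    exact this
  have Pmon : ∀ a b, b ≤ a → P a b := by
    intro a b h
    rw [← hP (fun _ => a) i0]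
    apply hmon
    intro k
    by_cases hk : k = i0
    · subst hk; simpa using h
    · simp [hk]
  have Pcomp : ∀ a b, ¬ P (a ⊓ b) a → ¬ P b a := by
    intro a b h
    have := (hcomp i0 a b a)
    simp only [StrictRel, alloc, hP] at this
    exact (this ⟨(Pc _ _).resolve_left h, h⟩).2
  have Pall : ∀ x y : N → A, (∀ i, P (x i) (y i)) → R x y := by
    intro x y h
    have key : ∀ F : Finset N, R x (F.piecewise y x) := by
      intro F
      induction F using Finset.induction_on with
      | empty => simpa using hrefl x
      | insert i F hi ih =>
        rw [Finset.piecewise_insert]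
        refine ht _ _ _ ih ?_
        have h1 := (hP (F.piecewise y x) i (x i) (y i)).2 (h i)
        have h2 : Function.update (F.piecewise y x) i (x i) = F.piecewise y x := by
          have : F.piecewise y x i = x i := by simp [hi]
          rw [← this]; simp
        rwa [h2] at h1
    simpa using key Finset.univ
  have hS : ∀ b, (∃ a, ¬ P a b) → ∀ c, P b c := fun b ⟨a, h⟩ c => Pmax b a c h
  have hperm : ∀ (σ : Equiv.Perm N) x y, R (x ∘ σ) y → R x y :=
    fun σ x y h => ht _ _ _ (hsym σ x).1 h
  have hpt : ∀ a b, ((∃ d, ¬ P d b) → ∃ d, ¬ P d a) → P a b := by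
    intro a b h
    by_cases hb : ∃ d, ¬ P d b
    · exact hS a (h hb) b
    · push Not at hb
      exact hb a
  refine ⟨{b | ∃ a, ¬ P a b}, ?_, ?_, ?_⟩
  · rintro x ⟨a, ha⟩ y hxy
    exact ⟨a, fun h => ha (Pt _ _ _ h (Pmon _ _ hxy))⟩
  · rintro x ⟨d, hd⟩ y hy
    by_contra hxy
    have hxy' : ∀ a, P a (x ⊓ y) := by
      intro a
      by_contra h
      exact hxy ⟨a, h⟩
    exact Pcomp x y (fun h => hd (Pt _ _ _ (hxy' d) h)) (hS y hy x)
  · intro x y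
    constructor
    · intro h
      by_contra hlt
      push Not at hlt
      obtain ⟨σ, hσ⟩ := exists_perm (fun i => x i ∈ {b | ∃ a, ¬ P a b})
        (fun i => y i ∈ {b | ∃ a, ¬ P a b}) hlt.le
      have hex : ∃ i, y (σ i) ∈ {b | ∃ a, ¬ P a b} ∧ ¬ x i ∈ {b | ∃ a, ¬ P a b} := by
        by_contra hno
        push Not at hno
        have : Nat.card {i // y i ∈ {b | ∃ a, ¬ P a b}} ≤
            Nat.card {i // x i ∈ {b | ∃ a, ¬ P a b}} := by
          apply Nat.card_le_card_of_injective
            (fun i : {i // y i ∈ {b | ∃ a, ¬ P a b}} =>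
              (⟨σ.symm i.1, hno _ (by simpa using i.2)⟩ :
                {i // x i ∈ {b | ∃ a, ¬ P a b}}))
          intro i j hij
          have := congrArg Subtype.val hij
          exact Subtype.ext (σ.symm.injective this)
        omega
      obtain ⟨i, hi1, hi2⟩ := hex
      have h1 : R (Function.update (y ∘ σ) i (x i)) x := by
        apply Pall
        intro k
        by_cases hk : k = i
        · subst hk; simpa using (Pc (x k) (x k)).elim id id
        · simp only [Function.update_of_ne hk]
          exact hpt _ _ (hσ k)
      have h2 : R (Function.update (y ∘ σ) i (x i)) (Function.update (y ∘ σ) i (y (σ i))) := by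
        have : Function.update (y ∘ σ) i (y (σ i)) = y ∘ σ :=
          Function.update_eq_self i (y ∘ σ)
        rw [this]
        exact ht _ _ _ h1 (ht _ _ _ h (hsym σ y).1)
      rw [hP] at h2
      obtain ⟨d, hd⟩ := hi1
      apply hi2
      exact absurd (Pt _ _ _ (by by_contra hh; exact hi2 ⟨d, hh⟩) h2) hd
    · intro h
      obtain ⟨σ, hσ⟩ := exists_perm _ _ h
      apply hperm σ
      apply Pall
      intro k
      exact hpt _ _ (hσ k)

end Helpers

/-- generalized threshold sufficientarianism is characterized by weak order,
symmetry, separability, sufficientarian judgment, monotonicity and ≥-complements. -/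
theorem stmt5 {N A : Type*} [Fintype N] (hN : 2 ≤ Fintype.card N) [SemilatticeInf A]
    (R : (N → A) → (N → A) → Prop) :
    IsGenThresholdSuff R ↔
      (WeakOrderRel R ∧ SymmetryAx R ∧ SeparabilityAx R ∧ SuffJudgment R ∧
        MonotonicityAx R ∧ ComplementsAx R) := by
  exact ⟨forward R, fun ⟨h1, h2, h3, h4, h5, h6⟩ => backward hN R h1 h2 h3 h4 h5 h6⟩
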